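/- Let X be a vertex, λ a complex number with Re λ > 0, and α_1,…,α_N > 0. Then the function x ↦ e^{−Re(λ) f_0(x)} · (∏_{j=1}^N |f_j(x)|^{α_j}) · (∏_{j∈X} |f_j(x)|)^{−1} is Lebesgue-integrable both on every arrangement domain Δ ∈ 𝒟⁺ and on the cone C⁺_X. -/

import Mathlib

open Set MeasureTheory Filter
open scoped Classical Real

noncomputable section

namespace HypArr

variable {k N : ℕ}

/-- The hyperplane `H j = f j ⁻¹ (0)` of the `j`-th affine form. -/
def Hyp (f : Fin N → ((Fin k → ℝ) →ᵃ[ℝ] ℝ)) (j : Fin N) : Set (Fin k → ℝ) :=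
  {x | f j x = 0}

/-- The complement `ℝ^k ∖ (H 1 ∪ ⋯ ∪ H N)` of the union of all the hyperplanes. -/
def HypCompl (f : Fin N → ((Fin k → ℝ) →ᵃ[ℝ] ℝ)) : Set (Fin k → ℝ) :=
  {x | ∀ j, f j x ≠ 0}

/-- `Δ` is an arrangement domain: a connected component of `ℝ^k ∖ (H 1 ∪ ⋯ ∪ H N)`. -/
def IsDomain (f : Fin N → ((Fin k → ℝ) →ᵃ[ℝ] ℝ)) (Δ : Set (Fin k → ℝ)) : Prop :=
  ∃ x ∈ HypCompl f, Δ = connectedComponentIn (HypCompl f) x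

/-- The hyperplanes `H 1, …, H N` are in generic position in `ℝ^k`: they are pairwise
distinct, any `k` of them intersect in exactly one point, and any `k+1` of them have
empty intersection. -/
def Generic (f : Fin N → ((Fin k → ℝ) →ᵃ[ℝ] ℝ)) : Prop :=
  (∀ i j : Fin N, i ≠ j → Hyp f i ≠ Hyp f j) ∧
  (∀ S : Finset (Fin N), S.card = k → ∃! x : Fin k → ℝ, ∀ j ∈ S, f j x = 0) ∧
  (∀ S : Finset (Fin N), S.card = k + 1 → ¬ ∃ x : Fin k → ℝ, ∀ j ∈ S, f j x = 0)

/-- `X` is a vertex of the arrangement. -/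
def IsVertex (f : Fin N → ((Fin k → ℝ) →ᵃ[ℝ] ℝ)) (X : Fin k → ℝ) : Prop :=
  ∃ S : Finset (Fin N), S.card = k ∧ ∀ j ∈ S, f j X = 0

/-- `X` is the vertex of the arrangement with index set `S`. -/
def IsVertexOf (f : Fin N → ((Fin k → ℝ) →ᵃ[ℝ] ℝ)) (S : Finset (Fin N))
    (X : Fin k → ℝ) : Prop :=
  S.card = k ∧ ∀ j ∈ S, f j X = 0

/-- The linear form `f0` is in general position with respect to the arrangement:
it takes pairwise distinct values at the vertices and is nonconstant on each
line `L_U = ∩_{j ∈ U} H j` for `U` of cardinality `k - 1`. -/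
def GenericLin (f : Fin N → ((Fin k → ℝ) →ᵃ[ℝ] ℝ)) (f0 : (Fin k → ℝ) →ₗ[ℝ] ℝ) : Prop :=
  (∀ X Y : Fin k → ℝ, IsVertex f X → IsVertex f Y → X ≠ Y → f0 X ≠ f0 Y) ∧
  ∀ U : Finset (Fin N), U.card = k - 1 →
    ∃ x y : Fin k → ℝ, (∀ j ∈ U, f j x = 0) ∧ (∀ j ∈ U, f j y = 0) ∧ f0 x ≠ f0 y

/-- `C` is a connected component of `ℝ^k ∖ ⋃_{j ∈ S} H j`. -/
def IsConeComp (f : Fin N → ((Fin k → ℝ) →ᵃ[ℝ] ℝ)) (S : Finset (Fin N))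
    (C : Set (Fin k → ℝ)) : Prop :=
  ∃ y, (∀ j ∈ S, f j y ≠ 0) ∧ C = connectedComponentIn {z | ∀ j ∈ S, f j z ≠ 0} y

/-- `C` is the cone `C⁺_X` of the vertex `X` with index set `S`: the unique connected
component of `ℝ^k ∖ ⋃_{j ∈ S} H j` on which `f0 - f0 X` is everywhere positive. -/
def IsPosCone (f : Fin N → ((Fin k → ℝ) →ᵃ[ℝ] ℝ)) (f0 : (Fin k → ℝ) →ₗ[ℝ] ℝ)
    (S : Finset (Fin N)) (X : Fin k → ℝ) (C : Set (Fin k → ℝ)) : Prop :=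
  IsConeComp f S C ∧ ∀ y ∈ C, f0 X < f0 y

/-- `C` is the cone `C⁻_X` of the vertex `X` with index set `S`: the unique connected
component of `ℝ^k ∖ ⋃_{j ∈ S} H j` on which `f0 - f0 X` is everywhere negative. -/
def IsNegCone (f : Fin N → ((Fin k → ℝ) →ᵃ[ℝ] ℝ)) (f0 : (Fin k → ℝ) →ₗ[ℝ] ℝ)
    (S : Finset (Fin N)) (X : Fin k → ℝ) (C : Set (Fin k → ℝ)) : Prop :=
  IsConeComp f S C ∧ ∀ y ∈ C, f0 y < f0 X

/-- `Δ` is the domain `Δ_X` of the vertex `X`: the unique arrangement domain whose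
closure contains `X` and on which `f0 - f0 X > 0`. -/
def IsDomOf (f : Fin N → ((Fin k → ℝ) →ᵃ[ℝ] ℝ)) (f0 : (Fin k → ℝ) →ₗ[ℝ] ℝ)
    (X : Fin k → ℝ) (Δ : Set (Fin k → ℝ)) : Prop :=
  IsDomain f Δ ∧ X ∈ closure Δ ∧ ∀ y ∈ Δ, f0 X < f0 y

/-- `Δ` is the domain `Δ⁻_X` of the vertex `X`: the unique arrangement domain whose
closure contains `X` and on which `f0 - f0 X < 0`. -/
def IsNegDomOf (f : Fin N → ((Fin k → ℝ) →ᵃ[ℝ] ℝ)) (f0 : (Fin k → ℝ) →ₗ[ℝ] ℝ)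
    (X : Fin k → ℝ) (Δ : Set (Fin k → ℝ)) : Prop :=
  IsDomain f Δ ∧ X ∈ closure Δ ∧ ∀ y ∈ Δ, f0 y < f0 X

/-- `Δ` belongs to `𝒟⁺`: it is an arrangement domain on which `f0` is bounded
from below. -/
def MemDplus (f : Fin N → ((Fin k → ℝ) →ᵃ[ℝ] ℝ)) (f0 : (Fin k → ℝ) →ₗ[ℝ] ℝ)
    (Δ : Set (Fin k → ℝ)) : Prop :=
  IsDomain f Δ ∧ BddBelow (f0 '' Δ)

/-- `Δ` belongs to `𝒟⁻`: it is an arrangement domain on which `f0` is bounded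
from above. -/
def MemDminus (f : Fin N → ((Fin k → ℝ) →ᵃ[ℝ] ℝ)) (f0 : (Fin k → ℝ) →ₗ[ℝ] ℝ)
    (Δ : Set (Fin k → ℝ)) : Prop :=
  IsDomain f Δ ∧ BddAbove (f0 '' Δ)

/-- The set `W` (a hyperplane) separates `S` from `T`: they lie in different connected
components of the complement of `W`. -/
def Separates {α : Type*} [TopologicalSpace α] (W S T : Set α) : Prop :=
  ∃ x ∈ S, ∃ y ∈ T, S ⊆ connectedComponentIn Wᶜ x ∧ T ⊆ connectedComponentIn Wᶜ y ∧
    connectedComponentIn Wᶜ x ≠ connectedComponentIn Wᶜ y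

/-- The index set of `ℋ(Δ, Δ')`, the set of hyperplanes separating `Δ` from `Δ'`. -/
def SepSet (f : Fin N → ((Fin k → ℝ) →ᵃ[ℝ] ℝ)) (Δ Δ' : Set (Fin k → ℝ)) :
    Finset (Fin N) :=
  Finset.univ.filter fun j => Separates (Hyp f j) Δ Δ'

/-!
Let `S` be the index set of the vertex `X`. The linear parts of `f j`, `j ∈ S`, form a coordinate
system, and in these coordinates `∏ j ∈ S, exp (-δ * |f j x|) * |f j x| ^ (α j - 1)` is a product
of one-variable integrable functions. It dominates the integrand up to a constant on every set where
`f0` grows at least like a positive multiple of the norm, because the remaining factors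
`|f j x| ^ α j` are absorbed by the exponential.

On a connected component of the complement of some of the hyperplanes, boundedness of `f0` from
below gives `0 ≤ f0` on the recession cone. If `f0` vanished at a nonzero `v` of that cone, then
`v` would be interior to a face of the cone, so `f0` would vanish on the whole linear span of that
face. Either this span contains the direction of some line `L_U`, or `v` itself spans such a
direction, and `f0` is nonconstant on `L_U`. So `f0` is positive on the recession cone away from
the origin, and compactness of the unit sphere turns this into linear growth of `f0`.
-/

section LinearGrowth

variable {E ι : Type*} [NormedAddCommGroup E] [NormedSpace ℝ E]

lemma exists_pos_mul_norm_le_of_homogeneous [ProperSpace E] {g : E → ℝ} (hg : Continuous g)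
    (hhom : ∀ t : ℝ, 0 ≤ t → ∀ v, g (t • v) = t * g v) (hpos : ∀ v, v ≠ 0 → 0 < g v) :
    ∃ c > 0, ∀ v, c * ‖v‖ ≤ g v := by
  have hg0 : g 0 = 0 := by simpa using hhom 0 le_rfl 0
  cases subsingleton_or_nontrivial E
  · exact ⟨1, one_pos, fun v => by simp [Subsingleton.elim v 0, hg0]⟩
  obtain ⟨u, hu, hmin⟩ := (isCompact_sphere (0 : E) 1).exists_isMinOn
    (NormedSpace.sphere_nonempty.2 zero_le_one) hg.continuousOn
  refine ⟨g u, hpos u (ne_zero_of_mem_unit_sphere ⟨u, hu⟩), fun v => ?_⟩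
  obtain rfl | hv := eq_or_ne v 0
  · simp [hg0]
  have hle : g u ≤ g (‖v‖⁻¹ • v) := hmin (by simp [norm_smul, hv])
  rwa [hhom _ (by positivity), inv_mul_eq_div, le_div_iff₀ (norm_pos_iff.2 hv)] at hle

lemma exists_pos_mul_norm_le_posPart_add_sum_negPart [FiniteDimensional ℝ E] (T : Finset ι)
    (a : ι → E →ₗ[ℝ] ℝ) (f0 : E →ₗ[ℝ] ℝ)
    (hpos : ∀ v, v ≠ 0 → (∀ j ∈ T, 0 ≤ a j v) → 0 < f0 v) :
    ∃ c > 0, ∀ v, c * ‖v‖ ≤ max (f0 v) 0 + ∑ j ∈ T, max (-a j v) 0 := by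
  have : ProperSpace E := FiniteDimensional.proper_real E
  apply exists_pos_mul_norm_le_of_homogeneous
  · have hf0 : Continuous f0 := f0.continuous_of_finiteDimensional
    have ha (j : ι) : Continuous (a j) := (a j).continuous_of_finiteDimensional
    fun_prop
  · intro t ht v
    simp only [map_smul, smul_eq_mul, mul_add, Finset.mul_sum, mul_max_of_nonneg _ _ ht, mul_zero,
      mul_neg]
  · intro v hv
    have hsum : 0 ≤ ∑ j ∈ T, max (-a j v) 0 := Finset.sum_nonneg fun _ _ => le_max_right _ _
    by_cases hT : ∀ j ∈ T, 0 ≤ a j v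
    · exact add_pos_of_pos_of_nonneg (lt_max_of_lt_left (hpos v hv hT)) hsum
    · push Not at hT
      obtain ⟨j, hj, hneg⟩ := hT
      exact add_pos_of_nonneg_of_pos (le_max_right _ _) <| Finset.sum_pos'
        (fun _ _ => le_max_right _ _) ⟨j, hj, lt_max_of_lt_left (neg_pos.2 hneg)⟩

end LinearGrowth

section Flats

variable {E ι : Type*} [AddCommGroup E] [Module ℝ E] {f : ι → E →ᵃ[ℝ] ℝ} {U Z : Finset ι} {v : E}

lemma affineMap_add (g : E →ᵃ[ℝ] ℝ) (x v : E) : g (x + v) = g x + g.linear v := by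
  simpa [add_comm] using g.map_vadd x v

/-- The direction space of the flat `L_U = ⋂ j ∈ U, H j`: the common kernel of the linear parts
of the forms `f j`, `j ∈ U`. It is defined also when the flat is empty. -/
def flatDirection (f : ι → E →ᵃ[ℝ] ℝ) (U : Finset ι) : Submodule ℝ E :=
  ⨅ j ∈ U, LinearMap.ker (f j).linear

lemma mem_flatDirection : v ∈ flatDirection f U ↔ ∀ j ∈ U, (f j).linear v = 0 := by
  simp [flatDirection]

lemma flatDirection_anti (h : Z ⊆ U) : flatDirection f U ≤ flatDirection f Z :=
  biInf_mono h

lemma flatDirection_ne_bot [FiniteDimensional ℝ E] (hU : U.card < Module.finrank ℝ E) :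
    flatDirection f U ≠ ⊥ := by
  have hker : LinearMap.ker (LinearMap.pi fun j : U => (f j).linear) ≠ ⊥ :=
    LinearMap.ker_ne_bot_of_finrank_lt (by simpa using hU)
  rwa [LinearMap.ker_pi, iInf_subtype] at hker

end Flats

section RecessionCone

variable {E ι : Type*} [AddCommGroup E] [Module ℝ E] {f : ι → E →ᵃ[ℝ] ℝ} {T : Finset ι}
  {f0 : E →ₗ[ℝ] ℝ} {x y v w : E}

/-- The points lying strictly on the same side as `y` of each hyperplane `H j`, `j ∈ T`. -/
def chamber (f : ι → E →ᵃ[ℝ] ℝ) (T : Finset ι) (y : E) : Set E :=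
  {x | ∀ j ∈ T, 0 < f j y * f j x}

/-- The recession cone of `chamber f T y`: the directions in which one can go to infinity inside
the chamber. -/
def recessionCone (f : ι → E →ᵃ[ℝ] ℝ) (T : Finset ι) (y : E) : Set E :=
  {v | ∀ j ∈ T, 0 ≤ f j y * (f j).linear v}

lemma mem_chamber_self (hy : ∀ j ∈ T, f j y ≠ 0) : y ∈ chamber f T y :=
  fun j hj => mul_self_pos.2 (hy j hj)

lemma add_smul_mem_chamber (hx : x ∈ chamber f T y) (hv : v ∈ recessionCone f T y) {t : ℝ}
    (ht : 0 ≤ t) : x + t • v ∈ chamber f T y := fun j hj => by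
  rw [affineMap_add, map_smul, smul_eq_mul, mul_add, mul_left_comm]
  exact add_pos_of_pos_of_nonneg (hx j hj) (mul_nonneg ht (hv j hj))

lemma convex_chamber : Convex ℝ (chamber f T y) := by
  simp only [chamber, ofPred_forall]
  exact convex_iInter₂ fun j _ =>
    (convex_Ioi (0 : ℝ)).affine_preimage (f j y • f j)

lemma nonneg_of_mem_recessionCone (hx : x ∈ chamber f T y)
    (hb : BddBelow (f0 '' chamber f T y)) (hv : v ∈ recessionCone f T y) : 0 ≤ f0 v := by
  obtain ⟨b, hb⟩ := hb
  by_contra! hneg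
  have htends : Tendsto (fun t : ℝ => f0 x + t * f0 v) atTop atBot :=
    tendsto_atBot_add_const_left _ _ (tendsto_id.atTop_mul_const_of_neg hneg)
  obtain ⟨t, hlt, ht⟩ := ((htends.eventually_lt_atBot b).and (eventually_ge_atTop 0)).exists
  have hle : b ≤ f0 (x + t • v) := hb (mem_image_of_mem f0 (add_smul_mem_chamber hx hv ht))
  rw [map_add, map_smul, smul_eq_mul] at hle
  exact hlt.not_ge hle

/-- A point `v` of the recession cone is interior to the face cut out by the forms vanishing
at `v`. -/
lemma eventually_smul_add_mem_recessionCone (hv : v ∈ recessionCone f T y)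
    (hw : w ∈ flatDirection f {j ∈ T | (f j).linear v = 0}) :
    ∀ᶠ M : ℝ in atTop, M • v + w ∈ recessionCone f T y := by
  refine (Finset.eventually_all T).2 fun j hj => ?_
  obtain hjv | hjv := (hv j hj).eq_or_lt
  · refine Eventually.of_forall fun M => ?_
    obtain hjy | hjv := mul_eq_zero.1 hjv.symm
    · simp [hjy]
    · simp [hjv, mem_flatDirection.1 hw j (Finset.mem_filter.2 ⟨hj, hjv⟩)]
  · have htends : Tendsto (fun M : ℝ => M * (f j y * (f j).linear v) + f j y * (f j).linear w)
        atTop atTop :=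
      tendsto_atTop_add_const_right _ _ (tendsto_id.atTop_mul_const hjv)
    filter_upwards [htends.eventually_ge_atTop 0] with M hM
    rwa [map_add, map_smul, smul_eq_mul, mul_add, mul_left_comm]

lemma flatDirection_le_ker_of_nonneg (hf0 : ∀ v ∈ recessionCone f T y, 0 ≤ f0 v)
    (hv : v ∈ recessionCone f T y) (hv0 : f0 v = 0) :
    flatDirection f {j ∈ T | (f j).linear v = 0} ≤ LinearMap.ker f0 := by
  have hnonneg : ∀ w ∈ flatDirection f {j ∈ T | (f j).linear v = 0}, 0 ≤ f0 w := fun w hw => by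
    obtain ⟨M, hM⟩ := (eventually_smul_add_mem_recessionCone hv hw).exists
    simpa [hv0] using hf0 _ hM
  intro w hw
  have hneg : 0 ≤ -f0 w := by simpa using hnonneg (-w) (neg_mem hw)
  exact le_antisymm (neg_nonneg.1 hneg) (hnonneg w hw)

lemma pos_of_mem_recessionCone [Fintype ι] [FiniteDimensional ℝ E]
    (hcard : Module.finrank ℝ E ≤ Fintype.card ι + 1)
    (hline : ∀ U : Finset ι, U.card + 1 = Module.finrank ℝ E →
      Disjoint (flatDirection f U) (LinearMap.ker f0))
    (hf0 : ∀ v ∈ recessionCone f T y, 0 ≤ f0 v) (hv : v ∈ recessionCone f T y) (hv_ne : v ≠ 0) :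
    0 < f0 v := by
  refine (hf0 v hv).lt_of_ne' fun hv0 => ?_
  set Z : Finset ι := {j ∈ T | (f j).linear v = 0}
  have hker : flatDirection f Z ≤ LinearMap.ker f0 := flatDirection_le_ker_of_nonneg hf0 hv hv0
  have hrank : 0 < Module.finrank ℝ E := Module.finrank_pos_iff_exists_ne_zero.2 ⟨v, hv_ne⟩
  obtain hsmall | hlarge := le_total Z.card (Module.finrank ℝ E - 1)
  · obtain ⟨U, hZU, hU⟩ := Finset.exists_superset_card_eq hsmall (by omega)
    exact flatDirection_ne_bot (by omega)
      ((hline U (by omega)).eq_bot_of_le ((flatDirection_anti hZU).trans hker))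
  · obtain ⟨U, hUZ, hU⟩ := Finset.exists_subset_card_eq hlarge
    have hvU : v ∈ flatDirection f U :=
      mem_flatDirection.2 fun j hj => (Finset.mem_filter.1 (hUZ hj)).2
    exact hv_ne (Submodule.disjoint_def.1 (hline U (by omega)) v hvU hv0)

end RecessionCone

section Chamber

variable {E ι : Type*} [NormedAddCommGroup E] [NormedSpace ℝ E] [FiniteDimensional ℝ E]
  {f : ι → E →ᵃ[ℝ] ℝ} {T : Finset ι} {y : E}

lemma connectedComponentIn_eq_chamber (hy : ∀ j ∈ T, f j y ≠ 0) :
    connectedComponentIn {z | ∀ j ∈ T, f j z ≠ 0} y = chamber f T y := by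
  apply Subset.antisymm
  · intro x hx j hj
    have himage : IsPreconnected
        ((fun z => f j y * f j z) '' connectedComponentIn {z | ∀ j ∈ T, f j z ≠ 0} y) :=
      isPreconnected_connectedComponentIn.image _
        (continuous_const.mul (f j).continuous_of_finiteDimensional).continuousOn
    by_contra! hle
    obtain ⟨z, hz, hz0⟩ := himage.Icc_subset (mem_image_of_mem _ hx)
      (mem_image_of_mem _ (mem_connectedComponentIn hy)) ⟨hle, mul_self_nonneg _⟩
    exact mul_ne_zero (hy j hj) (connectedComponentIn_subset _ _ hz j hj) hz0
  · exact convex_chamber.isPreconnected.subset_connectedComponentIn (mem_chamber_self hy)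
      fun x hx j hj => right_ne_zero_of_mul (hx j hj).ne'

lemma exists_mul_norm_sub_le_of_mem_chamber {f0 : E →ₗ[ℝ] ℝ}
    (hb : BddBelow (f0 '' chamber f T y))
    (hpos : ∀ v ∈ recessionCone f T y, v ≠ 0 → 0 < f0 v) :
    ∃ c > 0, ∃ C, ∀ x ∈ chamber f T y, c * ‖x‖ - C ≤ f0 x := by
  obtain ⟨b, hb⟩ := hb
  obtain ⟨c, hc, hle⟩ := exists_pos_mul_norm_le_posPart_add_sum_negPart T
    (fun j => f j y • (f j).linear) f0 fun v hv_ne hv => hpos v hv hv_ne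
  refine ⟨c, hc, |b| + ∑ j ∈ T, |f j y * f j 0|, fun x hx => ?_⟩
  have hposPart : max (f0 x) 0 ≤ f0 x + |b| := by
    have hbx : b ≤ f0 x := hb (mem_image_of_mem f0 hx)
    exact max_le (by linarith [abs_nonneg b]) (by linarith [neg_abs_le b])
  have hnegPart : ∑ j ∈ T, max (-(f j y * (f j).linear x)) 0 ≤ ∑ j ∈ T, |f j y * f j 0| := by
    refine Finset.sum_le_sum fun j hj => max_le ?_ (abs_nonneg _)
    have hjx : 0 < f j y * (f j 0 + (f j).linear x) := by
      simpa only [← affineMap_add, zero_add] using hx j hj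
    linarith [le_abs_self (f j y * f j 0)]
  have hx_le : c * ‖x‖ ≤ max (f0 x) 0 + ∑ j ∈ T, max (-(f j y * (f j).linear x)) 0 := hle x
  linarith

end Chamber

section GenericArrangement

variable {f : Fin N → ((Fin k → ℝ) →ᵃ[ℝ] ℝ)} {f0 : (Fin k → ℝ) →ₗ[ℝ] ℝ}

lemma Generic.flatDirection_eq_bot (hf : Generic f) {S : Finset (Fin N)} (hS : S.card = k) :
    flatDirection f S = ⊥ := by
  refine (Submodule.eq_bot_iff _).2 fun v hv => ?_
  obtain ⟨x, hx, huniq⟩ := hf.2.1 S hS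
  have hxv : x + v = x := huniq (x + v) fun j hj => by
    rw [affineMap_add, hx j hj, mem_flatDirection.1 hv j hj, add_zero]
  exact add_eq_left.1 hxv

lemma GenericLin.disjoint_flatDirection_ker (hf0 : GenericLin f f0) (hf : Generic f) (hkN : k ≤ N)
    {U : Finset (Fin N)} (hU : U.card + 1 = k) :
    Disjoint (flatDirection f U) (LinearMap.ker f0) := by
  obtain ⟨x, y, hx, hy, hxy⟩ := hf0.2 U (by omega)
  obtain ⟨i, -, hi⟩ := Finset.exists_mem_notMem_of_card_lt_card
    (s := U) (t := Finset.univ) (by rw [Finset.card_univ, Fintype.card_fin]; omega)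
  have eq_zero {v : Fin k → ℝ} (hvU : v ∈ flatDirection f U) (hvi : (f i).linear v = 0) :
      v = 0 := by
    have hbot := hf.flatDirection_eq_bot (S := insert i U) (by simp [hi, hU])
    refine (Submodule.eq_bot_iff _).1 hbot v (mem_flatDirection.2 ?_)
    exact (Finset.forall_mem_insert _ _ _).2 ⟨hvi, mem_flatDirection.1 hvU⟩
  have hu : x - y ∈ flatDirection f U := mem_flatDirection.2 fun j hj => by
    simpa [hx j hj, hy j hj] using (affineMap_add (f j) y (x - y)).symm
  rw [Submodule.disjoint_def]
  intro v hv hv0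
  refine eq_zero hv ?_
  have hpar : (f i).linear (x - y) • v - (f i).linear v • (x - y) = 0 :=
    eq_zero (sub_mem (Submodule.smul_mem _ _ hv) (Submodule.smul_mem _ _ hu)) (by simp [mul_comm])
  have hmul : (f i).linear v * f0 (x - y) = 0 := by
    simpa [LinearMap.mem_ker.1 hv0] using congrArg f0 hpar
  exact (mul_eq_zero.1 hmul).resolve_right (by rwa [map_sub, sub_eq_zero])

lemma isDomain_iff_isConeComp_univ {Δ : Set (Fin k → ℝ)} :
    IsDomain f Δ ↔ IsConeComp f Finset.univ Δ := by
  simp [IsDomain, IsConeComp, HypCompl]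

end GenericArrangement

section Integrability

variable {E ι : Type*} [NormedAddCommGroup E] [NormedSpace ℝ E] [FiniteDimensional ℝ E]

lemma integrable_exp_neg_mul_abs_mul_rpow_mul_inv {a δ : ℝ} (ha : 0 < a) (hδ : 0 < δ) :
    Integrable fun t : ℝ => Real.exp (-δ * |t|) * |t| ^ a * |t|⁻¹ := by
  have hIoi : IntegrableOn (fun t : ℝ => Real.exp (-δ * |t|) * |t| ^ a * |t|⁻¹) (Ioi 0) := by
    refine (integrableOn_rpow_mul_exp_neg_mul_rpow (p := 1) (s := a - 1) (b := δ)
      (by linarith) one_pos hδ).congr_fun (fun t ht => ?_) measurableSet_Ioi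
    simp only [abs_of_pos (mem_Ioi.1 ht), Real.rpow_one, Real.rpow_sub_one (ne_of_gt ht)]
    ring
  have hIio : IntegrableOn (fun t : ℝ => Real.exp (-δ * |t|) * |t| ^ a * |t|⁻¹) (Iio 0) := by
    rw [← neg_zero] at hIoi
    simpa only [abs_neg] using hIoi.comp_neg_Iio
  rw [← integrableOn_univ, ← Iic_union_Ioi]
  exact ((integrableOn_Iic_iff_integrableOn_Iio).2 hIio).union hIoi

lemma integrable_prod_comp_affineMap [MeasurableSpace E] [BorelSpace E] (μ : Measure E)
    [μ.IsAddHaarMeasure] {f : ι → E →ᵃ[ℝ] ℝ} {S : Finset ι}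
    (hS : S.card = Module.finrank ℝ E) (hSf : flatDirection f S = ⊥) {h : ι → ℝ → ℝ}
    (hh : ∀ j ∈ S, Integrable (h j)) : Integrable (fun x => ∏ j ∈ S, h j (f j x)) μ := by
  let L : E →ₗ[ℝ] (S → ℝ) := LinearMap.pi fun j => (f j).linear
  have hL : LinearMap.ker L = ⊥ := by rw [LinearMap.ker_pi, iInf_subtype, ← hSf, flatDirection]
  let e : E ≃L[ℝ] (S → ℝ) :=
    (LinearEquiv.ofInjectiveOfFinrankEq L (LinearMap.ker_eq_bot.1 hL)
      (by simp [hS])).toContinuousLinearEquiv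
  have hcoord : Integrable (fun u : S → ℝ => ∏ j : S, h j (u j + f j 0)) :=
    Integrable.fintype_prod fun j : S => (hh j j.2).comp_add_right (f j 0)
  have hmap : Integrable (fun u : S → ℝ => ∏ j : S, h j (u j + f j 0)) (μ.map e) := by
    rw [Measure.isAddLeftInvariant_eq_smul (μ.map e) volume]
    exact hcoord.smul_measure_nnreal
  refine (hmap.comp_measurable e.continuous.measurable).congr (Eventually.of_forall fun x => ?_)
  have hfx (j : S) : e x j + f j 0 = f j x := by
    rw [add_comm, ← zero_add x, affineMap_add, zero_add]
    rfl
  simpa only [Function.comp_apply, hfx] using Finset.prod_coe_sort S fun j => h j (f j x)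

variable [Fintype ι]

lemma exists_sum_abs_affineMap_le (f : ι → E →ᵃ[ℝ] ℝ) :
    ∃ D > 0, ∀ x, ∑ j, |f j x| ≤ D * (1 + ‖x‖) := by
  let A (j : ι) : E →L[ℝ] ℝ := (f j).linear.toContinuousLinearMap
  refine ⟨∑ j, (|f j 0| + ‖A j‖) + 1, by positivity, fun x => ?_⟩
  have hle (j : ι) : |f j x| ≤ (|f j 0| + ‖A j‖) * (1 + ‖x‖) := calc
    |f j x| = |f j 0 + A j x| := by simpa [A] using congrArg abs (affineMap_add (f j) 0 x)
    _ ≤ |f j 0| + ‖A j‖ * ‖x‖ := (abs_add_le _ _).trans (by gcongr; exact (A j).le_opNorm x)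
    _ ≤ (|f j 0| + ‖A j‖) * (1 + ‖x‖) := by
      nlinarith [mul_nonneg (abs_nonneg (f j 0)) (norm_nonneg x), norm_nonneg (A j)]
  calc ∑ j, |f j x| ≤ (∑ j, (|f j 0| + ‖A j‖)) * (1 + ‖x‖) := by
        rw [Finset.sum_mul]
        exact Finset.sum_le_sum fun j _ => hle j
    _ ≤ _ := by gcongr; linarith

lemma exists_exp_neg_mul_le_mul_prod_exp (f : ι → E →ᵃ[ℝ] ℝ) (f0 : E → ℝ) {c l : ℝ} (C : ℝ)
    (hc : 0 < c) (hl : 0 < l) :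
    ∃ δ > 0, ∀ x, c * ‖x‖ - C ≤ f0 x →
      Real.exp (-l * f0 x) ≤ Real.exp (l * (C + c)) * ∏ j, Real.exp (-δ * |f j x|) := by
  obtain ⟨D, hD, hle⟩ := exists_sum_abs_affineMap_le f
  refine ⟨l * c / D, by positivity, fun x hx => ?_⟩
  rw [← Real.exp_sum, ← Real.exp_add, ← Finset.mul_sum, Real.exp_le_exp]
  have hsum : l * c / D * ∑ j, |f j x| ≤ l * c * (1 + ‖x‖) := calc
    l * c / D * ∑ j, |f j x| ≤ l * c / D * (D * (1 + ‖x‖)) := by gcongr; exact hle x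
    _ = l * c * (1 + ‖x‖) := by field_simp
  linarith [mul_le_mul_of_nonneg_left hx hl.le]

lemma prod_exp_mul_prod_rpow_mul_inv_le {α : ι → ℝ} (hα : ∀ j, 0 ≤ α j) {δ : ℝ} (hδ : 0 < δ)
    (S : Finset ι) (r : ι → ℝ) :
    (∏ j, Real.exp (-δ * |r j|)) * (∏ j, |r j| ^ α j) * (∏ j ∈ S, |r j|)⁻¹ ≤
      (∏ j ∈ Sᶜ, (α j / δ) ^ α j) *
        ∏ j ∈ S, (Real.exp (-δ * |r j|) * |r j| ^ α j * |r j|⁻¹) := by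
  have hbound (j : ι) : Real.exp (-δ * |r j|) * |r j| ^ α j ≤ (α j / δ) ^ α j := by
    have hle := ProbabilityTheory.rpow_abs_le_mul_exp_abs (r j) (hα j) hδ.ne'
    rw [abs_of_pos hδ] at hle
    rwa [neg_mul, Real.exp_neg, inv_mul_le_iff₀ (Real.exp_pos _), mul_comm (Real.exp _)]
  calc (∏ j, Real.exp (-δ * |r j|)) * (∏ j, |r j| ^ α j) * (∏ j ∈ S, |r j|)⁻¹
      = (∏ j ∈ Sᶜ, (Real.exp (-δ * |r j|) * |r j| ^ α j)) *
          ∏ j ∈ S, (Real.exp (-δ * |r j|) * |r j| ^ α j * |r j|⁻¹) := by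
        rw [← Finset.prod_mul_distrib, ← Finset.prod_compl_mul_prod S, mul_assoc,
          ← Finset.prod_inv_distrib, ← Finset.prod_mul_distrib]
    _ ≤ _ := by
        gcongr with j
        exact hbound j

lemma integrableOn_setOf_mul_norm_sub_le [MeasurableSpace E] [BorelSpace E] (μ : Measure E)
    [μ.IsAddHaarMeasure] {f : ι → E →ᵃ[ℝ] ℝ} {S : Finset ι}
    (hS : S.card = Module.finrank ℝ E) (hSf : flatDirection f S = ⊥)
    {f0 : E → ℝ} (hf0 : Continuous f0) {α : ι → ℝ} (hα : ∀ j, 0 ≤ α j) (hαS : ∀ j ∈ S, 0 < α j)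
    {c l : ℝ} (C : ℝ) (hc : 0 < c) (hl : 0 < l) :
    IntegrableOn (fun x => Real.exp (-l * f0 x) * (∏ j, |f j x| ^ α j) * (∏ j ∈ S, |f j x|)⁻¹)
      {x | c * ‖x‖ - C ≤ f0 x} μ := by
  have hf (j : ι) : Measurable (f j) := (f j).continuous_of_finiteDimensional.measurable
  have hf0_meas : Measurable f0 := hf0.measurable
  have hset : MeasurableSet {x : E | c * ‖x‖ - C ≤ f0 x} :=
    (isClosed_le (by fun_prop) hf0).measurableSet
  obtain ⟨δ, hδ, hexp⟩ := exists_exp_neg_mul_le_mul_prod_exp f f0 C hc hl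
  have hprod := integrable_prod_comp_affineMap μ hS hSf fun j hj =>
    integrable_exp_neg_mul_abs_mul_rpow_mul_inv (hαS j hj) hδ
  refine Integrable.mono' (hprod.const_mul
    (Real.exp (l * (C + c)) * ∏ j ∈ Sᶜ, (α j / δ) ^ α j)).integrableOn
    (Measurable.aestronglyMeasurable (by fun_prop))
    ((ae_restrict_iff' hset).2 (Eventually.of_forall fun x hx => ?_))
  rw [Real.norm_of_nonneg (by positivity)]
  calc Real.exp (-l * f0 x) * (∏ j, |f j x| ^ α j) * (∏ j ∈ S, |f j x|)⁻¹
      ≤ (Real.exp (l * (C + c)) * ∏ j, Real.exp (-δ * |f j x|)) * (∏ j, |f j x| ^ α j) *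
          (∏ j ∈ S, |f j x|)⁻¹ := by gcongr; exact hexp x hx
    _ = Real.exp (l * (C + c)) * ((∏ j, Real.exp (-δ * |f j x|)) * (∏ j, |f j x| ^ α j) *
          (∏ j ∈ S, |f j x|)⁻¹) := by ring
    _ ≤ Real.exp (l * (C + c)) * ((∏ j ∈ Sᶜ, (α j / δ) ^ α j) *
          ∏ j ∈ S, (Real.exp (-δ * |f j x|) * |f j x| ^ α j * |f j x|⁻¹)) := by
        exact mul_le_mul_of_nonneg_left
          (prod_exp_mul_prod_rpow_mul_inv_le hα hδ S fun j => f j x) (Real.exp_pos _).le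
    _ = _ := by ring

theorem stmt_17_general [MeasurableSpace E] [BorelSpace E] (μ : Measure E) [μ.IsAddHaarMeasure]
    {f : ι → E →ᵃ[ℝ] ℝ} {f0 : E →ₗ[ℝ] ℝ}
    (hline : ∀ U : Finset ι, U.card + 1 = Module.finrank ℝ E →
      Disjoint (flatDirection f U) (LinearMap.ker f0))
    {S : Finset ι} (hS : S.card = Module.finrank ℝ E) (hSf : flatDirection f S = ⊥)
    {α : ι → ℝ} (hα : ∀ j, 0 ≤ α j) (hαS : ∀ j ∈ S, 0 < α j) {l : ℝ} (hl : 0 < l)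
    {T : Finset ι} {y : E} (hy : ∀ j ∈ T, f j y ≠ 0)
    (hb : BddBelow (f0 '' connectedComponentIn {z | ∀ j ∈ T, f j z ≠ 0} y)) :
    IntegrableOn (fun x => Real.exp (-l * f0 x) * (∏ j, |f j x| ^ α j) * (∏ j ∈ S, |f j x|)⁻¹)
      (connectedComponentIn {z | ∀ j ∈ T, f j z ≠ 0} y) μ := by
  rw [connectedComponentIn_eq_chamber hy] at hb ⊢
  have hcard : Module.finrank ℝ E ≤ Fintype.card ι + 1 := hS ▸ S.card_le_univ.trans (Nat.le_succ _)
  have hnonneg : ∀ v ∈ recessionCone f T y, 0 ≤ f0 v := fun v =>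
    nonneg_of_mem_recessionCone (mem_chamber_self hy) hb
  obtain ⟨c, hc, C, hle⟩ := exists_mul_norm_sub_le_of_mem_chamber hb fun v =>
    pos_of_mem_recessionCone hcard hline hnonneg
  exact (integrableOn_setOf_mul_norm_sub_le μ hS hSf f0.continuous_of_finiteDimensional hα hαS C
    hc hl).mono_set hle

end Integrability

/-- for a vertex `X`, `Re λ > 0` and weights `α j > 0`, the function
`x ↦ e^{-Re(λ) f0 x} (∏ j |f j x| ^ α j) (∏_{j ∈ X} |f j x|)⁻¹` is Lebesgue-integrable
on every arrangement domain `Δ ∈ 𝒟⁺` and on the cone `C⁺_X`. -/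
theorem stmt_17 {k N : ℕ} (hk : 1 ≤ k) (hkN : k ≤ N)
    (f : Fin N → ((Fin k → ℝ) →ᵃ[ℝ] ℝ)) (hf : Generic f)
    (f0 : (Fin k → ℝ) →ₗ[ℝ] ℝ) (hf0 : GenericLin f f0)
    (α : Fin N → ℝ) (hα : ∀ j, 0 < α j)
    (Sx : Finset (Fin N)) (X : Fin k → ℝ) (hX : IsVertexOf f Sx X)
    (lam : ℂ) (hlam : 0 < lam.re) :
    (∀ Δ : Set (Fin k → ℝ), MemDplus f f0 Δ →
      IntegrableOn
        (fun x : Fin k → ℝ => Real.exp (-lam.re * f0 x) *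
          (∏ j, |f j x| ^ α j) * (∏ j ∈ Sx, |f j x|)⁻¹) Δ volume) ∧
    (∀ C : Set (Fin k → ℝ), IsPosCone f f0 Sx X C →
      IntegrableOn
        (fun x : Fin k → ℝ => Real.exp (-lam.re * f0 x) *
          (∏ j, |f j x| ^ α j) * (∏ j ∈ Sx, |f j x|)⁻¹) C volume) := by
  have hline : ∀ U : Finset (Fin N), U.card + 1 = Module.finrank ℝ (Fin k → ℝ) →
      Disjoint (flatDirection f U) (LinearMap.ker f0) := fun U hU =>
    hf0.disjoint_flatDirection_ker hf hkN (by simpa using hU)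
  have integrableOn_component {T : Finset (Fin N)} {y : Fin k → ℝ} :=
    stmt_17_general volume (T := T) (y := y) hline (by simpa using hX.1)
      (hf.flatDirection_eq_bot hX.1) (fun j => (hα j).le) (fun j _ => hα j) hlam
  constructor
  · rintro Δ ⟨hΔ, hb⟩
    obtain ⟨y, hy, rfl⟩ := isDomain_iff_isConeComp_univ.1 hΔ
    exact integrableOn_component hy hb
  · rintro C ⟨⟨y, hy, rfl⟩, hpos⟩
    exact integrableOn_component hy ⟨f0 X, forall_mem_image.2 fun x hx => (hpos x hx).le⟩

end HypArr
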